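/- arXiv:1703.02848 — 2 statements merged into one kernel-verified Lean document; each statement's English description precedes it below -/
import Mathlib

section
/- Let n ≥ 1 and let G be a subgroup of S_n = Equiv.Perm (Fin n) whose action on Fin n is transitive. Fix a point a ∈ Fin n and let Stab denote the stabilizer of a in G. Suppose that for every finite collection T of orbits of Stab on Fin n that includes the orbit of a (which is the singleton {a}), the sum s of the cardinalities of the orbits in T satisfies s = 1, or s = n, or s does not divide n. Then the action of G on Fin n is primitive (i.e. the induced MulAction of G on Fin n is preprimitive). -/
/-- A `MulAction` is preprimitive if it is pretransitive and every block is trivial. -/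
def IsPreprimitive (G : Type*) (X : Type*) [Group G] [MulAction G X] : Prop :=
  MulAction.IsPretransitive G X ∧
    ∀ B : Set X, MulAction.IsBlock G B → MulAction.IsTrivialBlock B

/-!
A block containing `a` is stable under the stabilizer of `a`, hence a disjoint union of orbits of
that stabilizer, one of them the orbit of `a`. Its cardinality is therefore a sum of subdegrees, and
by transitivity it divides the degree. The hypothesis on such sums leaves only singletons and the
whole set as blocks through `a`, and by transitivity every nonempty block has a translate
through `a`.
-/

section SubdegreeCriterion

open MulAction (IsPretransitive IsBlock IsFixedBlock IsInvariantBlock IsTrivialBlock orbit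
  stabilizer)

theorem orbit_subset_of_isInvariantBlock {M X : Type*} [SMul M X] {B : Set X}
    (hB : IsInvariantBlock M B) {b : X} (hb : b ∈ B) : orbit M b ⊆ B := by
  rintro _ ⟨m, rfl⟩
  exact hB m (Set.smul_mem_smul_set hb)

variable {G X : Type*} [Group G] [MulAction G X]

theorem sum_card_orbits_eq_ncard [DecidableEq (Set X)] {B : Set X} (hB : IsFixedBlock G B)
    (hfin : B.Finite) :
    ∑ O ∈ hfin.toFinset.image (orbit G), Nat.card O = B.ncard := by
  rw [Set.ncard_eq_toFinset_card B hfin, Finset.card_eq_sum_card_image (orbit G)]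
  refine Finset.sum_congr rfl fun O hO ↦ ?_
  obtain ⟨b, hb, rfl⟩ := Finset.mem_image.mp hO
  have hsub : orbit G b ⊆ B :=
    orbit_subset_of_isInvariantBlock hB.isInvariantBlock (hfin.mem_toFinset.mp hb)
  have hfiber : orbit G b = ↑(hfin.toFinset.filter (orbit G · = orbit G b)) := by
    ext x
    simpa [MulAction.orbit_eq_iff] using @hsub x
  rw [Nat.card_coe_set_eq, ← Set.ncard_coe_finset, ← hfiber]

theorem isFixedBlock_stabilizer_of_mem {B : Set X} (hB : IsBlock G B) {a : X} (ha : a ∈ B) :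
    IsFixedBlock (stabilizer G a) B :=
  fun g ↦ hB.stabilizer_le ha g.2

theorem isTrivialBlock_of_ncard_eq [Finite X] {B : Set X}
    (hB : B.ncard = 1 ∨ B.ncard = Nat.card X) : IsTrivialBlock B :=
  hB.imp (fun hone ↦ B.ncard_le_one_iff_subsingleton.mp hone.le) B.eq_univ_iff_ncard.mpr

theorem primitive_of_subdegrees_general [Finite X] [IsPretransitive G X] (a : X)
    (h : ∀ T : Finset (Set X),
      (∀ O ∈ T, ∃ b : X, O = orbit (stabilizer G a) b) →
      orbit (stabilizer G a) a ∈ T →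
      (∑ O ∈ T, Nat.card O) = 1 ∨ (∑ O ∈ T, Nat.card O) = Nat.card X ∨
        ¬ (∑ O ∈ T, Nat.card O) ∣ Nat.card X) :
    IsPreprimitive G X := by
  classical
  suffices hbase : ∀ {B : Set X}, a ∈ B → IsBlock G B → IsTrivialBlock B from
    ⟨‹_›, fun _ ↦ (MulAction.IsPreprimitive.of_isTrivialBlock_base a hbase).2⟩
  intro B ha hB
  have hsum := sum_card_orbits_eq_ncard (isFixedBlock_stabilizer_of_mem hB ha) B.toFinite
  have hdvd : B.ncard ∣ Nat.card X := hB.ncard_dvd_card ⟨a, ha⟩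
  have hsubdegrees := h (B.toFinite.toFinset.image (orbit (stabilizer G a)))
    (fun O hO ↦ (Finset.mem_image.mp hO).imp fun _ hb ↦ hb.2.symm)
    (Finset.mem_image_of_mem _ (B.toFinite.mem_toFinset.mpr ha))
  rw [hsum] at hsubdegrees
  exact isTrivialBlock_of_ncard_eq (hsubdegrees.imp_right (Or.resolve_right · (not_not_intro hdvd)))

end SubdegreeCriterion

/-- Divisibility criterion for primitivity: if `G ≤ S_n` is transitive and, for a point
stabilizer `Stab` of `a`, every finite collection of `Stab`-orbits containing the orbit
of `a` has total cardinality `1`, `n`, or a non-divisor of `n`, then `G` is primitive. -/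
theorem primitive_of_subdegrees (n : ℕ) (hn : 1 ≤ n)
    (G : Subgroup (Equiv.Perm (Fin n)))
    (htrans : MulAction.IsPretransitive G (Fin n))
    (a : Fin n)
    (h : ∀ T : Finset (Set (Fin n)),
      (∀ O ∈ T, ∃ b : Fin n, O = MulAction.orbit (MulAction.stabilizer G a) b) →
      MulAction.orbit (MulAction.stabilizer G a) a ∈ T →
      (∑ O ∈ T, Nat.card O) = 1 ∨ (∑ O ∈ T, Nat.card O) = n ∨
        ¬ (∑ O ∈ T, Nat.card O) ∣ n) :
    IsPreprimitive G (Fin n) :=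
  primitive_of_subdegrees_general a (by simpa only [Nat.card_fin] using h)
end

section
/- Let n = 52 and let x, y ∈ S_52 be the permutations given in the context, with z = (x·y)⁻¹. Then (x, y, z) is a nice triple; the cycle types of x, y, z are 8^5·4^3, 2^24 and 4^10·2^4 respectively; and the subgroup ⟨x, y⟩ of S_52 has cardinality 11232 (the order of Aut(PSL(3,3))). -/
/-- `permInd s` = (sum of the cycle type of `s`) − (number of entries of the cycle type of `s`),
i.e. `n` minus the number of cycles of `s` when fixed points are counted as cycles. -/
def permInd {n : ℕ} (s : Equiv.Perm (Fin n)) : ℕ :=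
  s.cycleType.sum - Multiset.card s.cycleType

/-- A triple `(x, y, z)` of permutations in `S_n` is *nice*:
(i) `x * y * z = 1`; (ii) `G = ⟨x, y⟩` is neither the alternating nor the symmetric group;
(iii) `G` acts primitively on `Fin n` and is almost simple; (iv) the triple has genus 0;
(v) the triple is rigid in `G`; (vi) `x`, `y`, `z` lie in rational conjugacy classes of `G`. -/
def IsNice {n : ℕ} (x y z : Equiv.Perm (Fin n)) : Prop :=
  x * y * z = 1 ∧
  (Subgroup.closure {x, y} ≠ alternatingGroup (Fin n) ∧
    Subgroup.closure {x, y} ≠ ⊤) ∧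
  IsPreprimitive (Subgroup.closure {x, y}) (Fin n) ∧
  (∃ S : Subgroup (Subgroup.closure {x, y}), S.Normal ∧ IsSimpleGroup S ∧
    (∃ a b : S, a * b ≠ b * a) ∧
    Subgroup.centralizer (S : Set (Subgroup.closure {x, y})) = ⊥) ∧
  permInd x + permInd y + permInd z = 2 * (n - 1) ∧
  (∀ x' y' z' : Equiv.Perm (Fin n),
    x' * y' * z' = 1 →
    Subgroup.closure {x', y'} = Subgroup.closure {x, y} →
    (∃ g ∈ Subgroup.closure {x, y}, g * x * g⁻¹ = x') →
    (∃ g ∈ Subgroup.closure {x, y}, g * y * g⁻¹ = y') →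
    (∃ g ∈ Subgroup.closure {x, y}, g * z * g⁻¹ = z') →
    ∃ g ∈ Subgroup.closure {x, y},
      g * x * g⁻¹ = x' ∧ g * y * g⁻¹ = y' ∧ g * z * g⁻¹ = z') ∧
  ∀ g ∈ ({x, y, z} : Set (Equiv.Perm (Fin n))), ∀ k : ℤ,
    Int.gcd k (orderOf g) = 1 →
    ∃ h ∈ Subgroup.closure {x, y}, h * g * h⁻¹ = g ^ k

/-- The permutation given by a list of (disjoint) cycles, each written as a list of points. -/
def permOfCycles {n : ℕ} (cs : List (List (Fin n))) : Equiv.Perm (Fin n) :=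
  (cs.map List.formPerm).prod

def x : Equiv.Perm (Fin 52) := permOfCycles [
  [1, 41, 8, 9, 45, 32, 39, 44],
  [2, 13, 29, 21, 50, 26, 34, 6],
  [3, 35, 52, 30],
  [4, 7, 22, 18, 33, 43, 10, 38],
  [5, 37, 27, 42, 25, 15, 12, 24],
  [11, 51, 17, 47, 36, 31, 49, 40],
  [14, 20, 28, 48],
  [16, 19, 23, 46]]

def y : Equiv.Perm (Fin 52) := permOfCycles [
  [1, 20],
  [2, 34],
  [3, 7],
  [4, 16],
  [5, 17],
  [8, 41],
  [9, 13],
  [10, 52],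
  [11, 40],
  [12, 23],
  [14, 29],
  [15, 25],
  [18, 33],
  [19, 47],
  [21, 35],
  [22, 43],
  [26, 42],
  [27, 45],
  [28, 36],
  [31, 39],
  [32, 49],
  [37, 51],
  [38, 48],
  [46, 50]]

/-!
The 52 points are the flags of the projective plane over `𝔽₃`, a flag being a pair of orthogonal
points `(⟨v⟩, ⟨w⟩)` that stands for the point `⟨v⟩` on the line `wᗮ`. Numbered suitably, `x` is the
action of a matrix `M ∈ SL(3, 3)` and `y` is the standard polarity, exchanging `⟨v⟩` and `⟨w⟩`;
conjugation by `y` is therefore the inverse transpose. Since `M` and its inverse transpose generate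
`SL(3, 3)`, the group `⟨x, y⟩` is `SL(3, 3)` extended by the inverse transpose, and its order is
`2 · 5616`. `SL(3, 3)` is simple by Iwasawa's criterion; its centralizer is trivial because its
center is and because `M` is not conjugate to its inverse transpose. The stabilizer of a flag has
orbits of lengths `1, 6, 18, 27`, and no union of some but not all of them that properly contains
the fixed flag has size dividing 52, whence primitivity.

Elements outside `SL(3, 3)` have the form `A y`, and conjugating by `C ∈ SL(3, 3)` replaces the
bilinear form `A` by the congruent form `C A Cᵀ`. For rigidity one may assume `x' = x`; then
`y' = S y` with `S = A Aᵀ`, and `M S` is congruent to `M`. As `M + Mᵀ = -v vᵀ` for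
`v = (1, 1, 1)`, this makes `M S + (M S)ᵀ = -w wᵀ` for some vector `w`, and the only symmetric `S`
of determinant 1 with this property are `Mᵏ (Mᵏ)ᵀ`, so that `y' = xᵏ y x⁻ᵏ`.
-/

open Matrix.SpecialLinearGroup
open scoped MatrixGroups LinearAlgebra.Projectivization commutatorElement

/-! ### Simplicity of special linear groups -/

section SimplicityOfSL

variable {ι F : Type*} [Fintype ι] [DecidableEq ι] [Field F]

theorem diag2n_eq_prod_transvections {i j : ι} (hij : i ≠ j) {a : F} (ha : a ≠ 0) :
    diag2n hij a ha =
      transvection hij a * transvection hij.symm (-a⁻¹) *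
        transvection hij a * transvection hij (-1) *
        transvection hij.symm 1 * transvection hij (-1) := by
  apply Subtype.ext
  simp only [coe_mul, transvection_coe, diag2n_coe]
  ext k l
  simp only [mul_add, add_mul, hij, hij.symm, ha, ne_eq, not_false_eq_true, mul_one, one_mul,
    mul_neg, neg_mul, neg_neg, add_zero, mul_inv_cancel₀, inv_mul_cancel₀,
    Matrix.single_mul_single_same, Matrix.single_mul_single_of_ne, Matrix.add_apply,
    Matrix.diagonal_apply, Matrix.one_apply, Matrix.single_apply]
  grind

theorem closure_transvections_eq_top [Nontrivial ι] :
    Subgroup.closure {t : Matrix.SpecialLinearGroup ι F |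
      ∃ (i j : ι) (hij : i ≠ j) (a : F), t = transvection hij a} = ⊤ := by
  have transvection_mem {i j : ι} (hij : i ≠ j) (a : F) :
      transvection hij a ∈ Subgroup.closure
        {t : Matrix.SpecialLinearGroup ι F |
          ∃ (i j : ι) (hij : i ≠ j) (a : F), t = transvection hij a} :=
    Subgroup.subset_closure ⟨i, j, hij, a, rfl⟩
  refine eq_top_iff.2 fun A _ ↦ diagonal_transvection_induction' _ A (fun i j hij a ha ↦ ?_)
    (fun _ _ hij a ↦ transvection_mem hij a) fun _ _ ↦ mul_mem
  rw [diag2n_eq_prod_transvections hij ha]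
  repeat' apply mul_mem
  all_goals exact transvection_mem _ _

theorem transvection_eq_commutatorElement {R : Type*} [CommRing R] {i j k : ι} (hij : i ≠ j)
    (hik : i ≠ k) (hkj : k ≠ j) (a : R) :
    transvection hij a = ⁅transvection hik a, transvection hkj 1⁆ := by
  rw [commutatorElement_def, transvection_inv, transvection_inv]
  apply Subtype.ext
  simp only [coe_mul, transvection_coe]
  ext u v
  simp only [mul_add, add_mul, hij.symm, hik.symm, hkj.symm, ne_eq, not_false_eq_true,
    Matrix.single_mul_single_same, Matrix.single_mul_single_of_ne, Matrix.add_apply,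
    Matrix.single_apply, mul_one, one_mul, mul_neg, add_zero]
  grind

theorem commutator_specialLinearGroup_eq_top (hι : 3 ≤ Fintype.card ι) :
    commutator (Matrix.SpecialLinearGroup ι F) = ⊤ := by
  have : Nontrivial ι := Fintype.one_lt_card_iff_nontrivial.1 (by lia)
  refine eq_top_iff.2 (closure_transvections_eq_top.symm.trans_le ((Subgroup.closure_le _).2 ?_))
  rintro _ ⟨i, j, hij, a, rfl⟩
  obtain ⟨k, hki, hkj⟩ := ENat.exists_ne_ne_of_three_le (α := ι) (by simpa using mod_cast hι) i j
  rw [transvection_eq_commutatorElement hij hki.symm hkj]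
  exact Subgroup.commutator_mem_commutator (Subgroup.mem_top _) (Subgroup.mem_top _)

theorem iSup_lineStab_eq_top [Nontrivial ι] :
    ⨆ p : ℙ F (ι → F), lineStab p.submodule = (⊤ : Subgroup (Matrix.SpecialLinearGroup ι F)) := by
  refine eq_top_iff.2 (closure_transvections_eq_top.symm.trans_le ((Subgroup.closure_le _).2 ?_))
  rintro _ ⟨i, j, hij, a, rfl⟩
  have single_ne_zero : (Pi.single i 1 : ι → F) ≠ 0 := Pi.single_ne_zero_iff.2 one_ne_zero
  refine Subgroup.mem_iSup_of_mem (Projectivization.mk F _ single_ne_zero) ?_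
  rw [Projectivization.submodule_mk]
  exact SL2Gen.transvection_mem_lineStab hij a

/-- The root subgroups of `SL(ι, F)`, indexed by the points of projective space, in the form
required by Iwasawa's simplicity criterion. -/
noncomputable def specialLinearGroupIwasawaStructure [Nontrivial ι] :
    MulAction.IwasawaStructure (Matrix.SpecialLinearGroup ι F) (ℙ F (ι → F)) where
  T p := lineStab p.submodule
  is_comm p := by
    rw [← Projectivization.mk_rep p, Projectivization.submodule_mk]
    exact lineStab_isMulCommutative_of_span p.rep p.rep_nonzero
  is_conj g p := by rw [PSL.smul_submodule, lineStab_smul]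
  is_generator := iSup_lineStab_eq_top

theorem faithfulSMul_projectivization (h : Subgroup.center (Matrix.SpecialLinearGroup ι F) = ⊥) :
    FaithfulSMul (Matrix.SpecialLinearGroup ι F) (ℙ F (ι → F)) := by
  rw [faithfulSMul_iff]
  intro A hA
  rw [← Subgroup.mem_bot, ← h, ← Projectivization.SL_mulAction_ker]
  exact Equiv.ext hA

theorem isSimpleGroup_specialLinearGroup (hι : 3 ≤ Fintype.card ι)
    (hcenter : Subgroup.center (Matrix.SpecialLinearGroup ι F) = ⊥) :
    IsSimpleGroup (Matrix.SpecialLinearGroup ι F) := by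
  have : Nontrivial ι := Fintype.one_lt_card_iff_nontrivial.1 (by lia)
  have : Nontrivial (Matrix.SpecialLinearGroup ι F) :=
    (QuotientGroup.mk_surjective (s := Subgroup.center _)).nontrivial
  exact specialLinearGroupIwasawaStructure.isSimpleGroup
    (commutator_specialLinearGroup_eq_top hι) (faithfulSMul_projectivization hcenter)

end SimplicityOfSL

/-! ### The contragredient and the action on flags -/

theorem exists_orthogonal {ι F : Type*} [Fintype ι] [Field F]
    (hι : 1 < Fintype.card ι) (p : ℙ F (ι → F)) : ∃ q : ℙ F (ι → F), p.orthogonal q := by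
  induction p using Projectivization.ind with | _ v hv
  have ker_ne_bot : LinearMap.ker (dotProductBilin F F v) ≠ ⊥ :=
    LinearMap.ker_ne_bot_of_finrank_lt (by simpa using hι)
  obtain ⟨w, hvw, hw⟩ := Submodule.exists_mem_ne_zero_of_ne_bot ker_ne_bot
  exact ⟨.mk F w hw, (Projectivization.orthogonal_mk hv hw).2 hvw⟩

section Flags

variable {ι R : Type*} [Fintype ι] [DecidableEq ι] [CommRing R]

/-- The contragredient (inverse transpose) automorphism of `SL(ι, R)`: the action on linear
forms, written in the dual basis. -/
def contragredient : Matrix.SpecialLinearGroup ι R →* Matrix.SpecialLinearGroup ι R where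
  toFun A := A⁻¹.transpose
  map_one' := by
    rw [inv_one]
    exact Subtype.ext Matrix.transpose_one
  map_mul' A B := by
    rw [mul_inv_rev]
    exact Subtype.ext (Matrix.transpose_mul _ _)

theorem contragredient_mul_transpose (A : Matrix.SpecialLinearGroup ι R) :
    contragredient A * A.transpose = 1 :=
  Subtype.ext ((Matrix.transpose_mul _ _).symm.trans
    ((congrArg (·.val.transpose) (mul_inv_cancel A)).trans Matrix.transpose_one))

theorem contragredient_eq_inv_transpose (A : Matrix.SpecialLinearGroup ι R) :
    contragredient A = A.transpose⁻¹ :=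
  eq_inv_of_mul_eq_one_left (contragredient_mul_transpose A)

theorem contragredient_eq_of_mul_transpose_eq_one {A B : Matrix.SpecialLinearGroup ι R}
    (h : B * A.transpose = 1) : contragredient A = B :=
  (contragredient_eq_inv_transpose A).trans (eq_inv_of_mul_eq_one_left h).symm

theorem contragredient_inv (A : Matrix.SpecialLinearGroup ι R) :
    contragredient A⁻¹ = A.transpose := by
  rw [map_inv, contragredient_eq_inv_transpose, inv_inv]

theorem contragredient_contragredient (A : Matrix.SpecialLinearGroup ι R) :
    contragredient (contragredient A) = A := by
  rw [contragredient_eq_inv_transpose, inv_eq_iff_mul_eq_one]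
  exact inv_mul_cancel A

theorem trace_contragredient (A : Matrix.SpecialLinearGroup ι R) :
    (contragredient A).val.trace = A⁻¹.val.trace :=
  Matrix.trace_transpose _

theorem contragredient_smul_dotProduct_smul (A : Matrix.SpecialLinearGroup ι R) (v w : ι → R) :
    (A • v) ⬝ᵥ (contragredient A • w) = v ⬝ᵥ w := by
  have : A⁻¹.val * A.val = 1 := congrArg Subtype.val (inv_mul_cancel A)
  change (A.val.mulVec v) ⬝ᵥ (A⁻¹.val.transpose.mulVec w) = _
  rw [Matrix.mulVec_transpose, dotProduct_comm, ← Matrix.dotProduct_mulVec, Matrix.mulVec_mulVec,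
    this, Matrix.one_mulVec, dotProduct_comm]

theorem contragredient_transvection {i j : ι} (hij : i ≠ j) (a : R) :
    contragredient (transvection hij a) = transvection hij.symm (-a) := by
  apply Subtype.ext
  change (transvection hij a)⁻¹.val.transpose = _
  rw [transvection_inv]
  simp [transvection_coe]

variable {F : Type*} [Field F]

variable (ι F) in
/-- Incident point–hyperplane pairs of the projective space over `F`; the hyperplane `wᗮ` is
recorded by the point `w`. -/
@[ext]
structure ProjFlag where
  point : ℙ F (ι → F)
  polar : ℙ F (ι → F)
  orthogonal : point.orthogonal polar

theorem orthogonal_smul_contragredient_smul (A : Matrix.SpecialLinearGroup ι F)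
    {p q : ℙ F (ι → F)} (h : p.orthogonal q) : (A • p).orthogonal (contragredient A • q) := by
  induction p using Projectivization.ind with | _ v hv
  induction q using Projectivization.ind with | _ w hw
  rw [Projectivization.smul_mk, Projectivization.smul_mk, Projectivization.orthogonal_mk,
    contragredient_smul_dotProduct_smul]
  exact (Projectivization.orthogonal_mk hv hw).1 h

instance : MulAction (Matrix.SpecialLinearGroup ι F) (ProjFlag ι F) where
  smul A q := ⟨A • q.point, contragredient A • q.polar,
    orthogonal_smul_contragredient_smul A q.orthogonal⟩
  one_smul q := ProjFlag.ext (one_smul _ _) (by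
    change contragredient 1 • q.polar = q.polar
    rw [map_one, one_smul])
  mul_smul A B q := ProjFlag.ext (mul_smul _ _ _) (by
    change contragredient (A * B) • q.polar = contragredient A • contragredient B • q.polar
    rw [map_mul, mul_smul])

theorem smul_projFlag_mk_eq_iff (A : Matrix.SpecialLinearGroup ι F) {v w v' w' : ι → F}
    {hv : v ≠ 0} {hw : w ≠ 0} {hv' : v' ≠ 0} {hw' : w' ≠ 0} {h h'} :
    A • ProjFlag.mk (.mk F v hv) (.mk F w hw) h = ⟨.mk F v' hv', .mk F w' hw', h'⟩ ↔
      (∃ a : F, a • v' = A • v) ∧ ∃ a : F, a • w' = contragredient A • w := by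
  rw [← Projectivization.mk_eq_mk_iff' F (A • v) v' ((smul_ne_zero_iff_ne A).2 hv) hv',
    ← Projectivization.mk_eq_mk_iff' F _ w' ((smul_ne_zero_iff_ne (contragredient A)).2 hw) hw']
  exact ProjFlag.ext_iff

/-- The polarity of flags that exchanges `⟨v⟩ ⊆ wᗮ` and `⟨w⟩ ⊆ vᗮ`. -/
def flagSwap : Equiv.Perm (ProjFlag ι F) :=
  Function.Involutive.toPerm
    (fun q ↦ ⟨q.polar, q.point, Projectivization.orthogonal_comm.1 q.orthogonal⟩) fun _ ↦ rfl

theorem flagSwap_smul (A : Matrix.SpecialLinearGroup ι F) (q : ProjFlag ι F) :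
    flagSwap (A • q) = contragredient A • flagSwap q :=
  ProjFlag.ext rfl (by
    change A • q.point = contragredient (contragredient A) • q.point
    rw [contragredient_contragredient])

theorem faithfulSMul_projFlag (hι : 1 < Fintype.card ι)
    (hcenter : Subgroup.center (Matrix.SpecialLinearGroup ι F) = ⊥) :
    FaithfulSMul (Matrix.SpecialLinearGroup ι F) (ProjFlag ι F) := by
  rw [faithfulSMul_iff]
  intro A hA
  have := faithfulSMul_projectivization hcenter
  refine (faithfulSMul_iff.1 this) A fun p ↦ ?_
  obtain ⟨q, hq⟩ := exists_orthogonal hι p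
  exact congrArg ProjFlag.point (hA ⟨p, q, hq⟩)

end Flags

/-! ### The flags of the projective plane over `𝔽₃` -/

/-- The point of the flag of the projective plane over `𝔽₃` numbered `i`; its line is the
polar of `pointVec (y i)`. The numbering starts from the flag `(⟨1,1,1⟩, ⟨1,1,1⟩ᗮ)`, numbered `6`,
and is forced by asking that `x` be a linear map and `y` the swap of points and lines. -/
def pointVec : Fin 52 → Fin 3 → ZMod 3 := ![
    ![1, 2, 1], ![1, 2, 2], ![0, 1, 2], ![1, 2, 0], ![1, 1, 0], ![1, 0, 0], ![1, 1, 1],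
    ![1, 1, 2], ![0, 0, 1], ![1, 2, 1], ![1, 0, 2], ![0, 1, 1], ![1, 1, 0], ![0, 1, 1],
    ![1, 0, 1], ![0, 1, 0], ![0, 0, 1], ![0, 1, 0], ![1, 1, 1], ![1, 2, 1], ![1, 0, 1],
    ![0, 1, 0], ![1, 0, 0], ![1, 2, 2], ![1, 1, 2], ![1, 0, 2], ![1, 1, 2], ![0, 1, 2],
    ![1, 0, 1], ![1, 0, 2], ![1, 2, 2], ![1, 0, 0], ![1, 2, 0], ![0, 1, 2], ![1, 0, 0],
    ![0, 0, 1], ![1, 1, 2], ![1, 1, 1], ![0, 1, 0], ![0, 0, 1], ![0, 1, 2], ![1, 2, 0],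
    ![0, 1, 1], ![0, 1, 1], ![1, 2, 1], ![1, 2, 2], ![1, 2, 0], ![1, 1, 0], ![1, 0, 1],
    ![1, 1, 1], ![1, 1, 0], ![1, 0, 2]]

theorem y_apply_y_apply (i : Fin 52) : y (y i) = i := by
  revert i
  decide +kernel

theorem pointVec_ne_zero (i : Fin 52) : pointVec i ≠ 0 := by
  revert i
  decide +kernel

theorem pointVec_dotProduct_pointVec (i : Fin 52) : pointVec i ⬝ᵥ pointVec (y i) = 0 := by
  revert i
  decide +kernel

theorem pointVec_injective (i j : Fin 52) (hpoint : ∃ a : ZMod 3, a • pointVec j = pointVec i)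
    (hpolar : ∃ a : ZMod 3, a • pointVec (y j) = pointVec (y i)) : i = j := by
  revert i j
  decide +kernel

theorem exists_pointVec_eq (v w : Fin 3 → ZMod 3) (hv : v ≠ 0) (hw : w ≠ 0) (hvw : v ⬝ᵥ w = 0) :
    ∃ i, (∃ a : ZMod 3, a • v = pointVec i) ∧ ∃ a : ZMod 3, a • w = pointVec (y i) := by
  revert v w
  decide +kernel

/-- The flag of the projective plane over `𝔽₃` numbered `i`. -/
def numberedFlag (i : Fin 52) : ProjFlag (Fin 3) (ZMod 3) where
  point := .mk _ (pointVec i) (pointVec_ne_zero i)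
  polar := .mk _ (pointVec (y i)) (pointVec_ne_zero (y i))
  orthogonal := (Projectivization.orthogonal_mk _ _).2 (pointVec_dotProduct_pointVec i)

theorem numberedFlag_bijective : Function.Bijective numberedFlag := by
  refine ⟨fun i j hij ↦ ?_, fun ⟨p, q, hpq⟩ ↦ ?_⟩
  · obtain ⟨hpoint, hpolar⟩ := ProjFlag.ext_iff.1 hij
    exact pointVec_injective i j ((Projectivization.mk_eq_mk_iff' ..).1 hpoint)
      ((Projectivization.mk_eq_mk_iff' ..).1 hpolar)
  · induction p using Projectivization.ind with | _ v hv
    induction q using Projectivization.ind with | _ w hw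
    obtain ⟨i, hpoint, hpolar⟩ :=
      exists_pointVec_eq v w hv hw ((Projectivization.orthogonal_mk hv hw).1 hpq)
    exact ⟨i, ProjFlag.ext ((Projectivization.mk_eq_mk_iff' ..).2 hpoint)
      ((Projectivization.mk_eq_mk_iff' ..).2 hpolar)⟩

/-- The numbering of the flags of the projective plane over `𝔽₃`, as a bijection. -/
noncomputable def flagNumbering : Fin 52 ≃ ProjFlag (Fin 3) (ZMod 3) :=
  Equiv.ofBijective numberedFlag numberedFlag_bijective

/-- The action of `SL(3, 3)` on the 52 flags of the projective plane over `𝔽₃`, read on `Fin 52`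
through the numbering. -/
noncomputable def flagPerm : SL(3, ZMod 3) →* Equiv.Perm (Fin 52) :=
  flagNumbering.symm.permCongrHom.toMonoidHom.comp (MulAction.toPermHom _ _)

theorem flagNumbering_flagPerm (A : SL(3, ZMod 3)) (i : Fin 52) :
    flagNumbering (flagPerm A i) = A • flagNumbering i :=
  flagNumbering.apply_symm_apply (A • flagNumbering i)

theorem flagNumbering_y (i : Fin 52) : flagNumbering (y i) = flagSwap (flagNumbering i) := by
  refine ProjFlag.ext rfl ?_
  simp only [flagNumbering, Equiv.ofBijective_apply, numberedFlag, y_apply_y_apply]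
  rfl

theorem y_mul_flagPerm (A : SL(3, ZMod 3)) :
    y * flagPerm A = flagPerm (contragredient A) * y := by
  ext1 i
  apply flagNumbering.injective
  simp only [Equiv.Perm.mul_apply, flagNumbering_y, flagNumbering_flagPerm, flagSwap_smul]

theorem flagPerm_eq_of_smul_pointVec {A : SL(3, ZMod 3)} {i j : Fin 52}
    (hpoint : ∃ a : ZMod 3, a • pointVec j = A • pointVec i)
    (hpolar : ∃ a : ZMod 3, a • pointVec (y j) = contragredient A • pointVec (y i)) :
    flagPerm A i = j := by
  apply flagNumbering.injective
  rw [flagNumbering_flagPerm]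
  exact (smul_projFlag_mk_eq_iff A).2 ⟨hpoint, hpolar⟩

theorem center_SL3_eq_bot : Subgroup.center SL(3, ZMod 3) = ⊥ := by
  refine (Subgroup.eq_bot_iff_forall _).2 fun A hA ↦ ?_
  obtain ⟨r, hr, hA⟩ := mem_center_iff.1 hA
  have : ∀ r : ZMod 3, r ^ 3 = 1 → r = 1 := by decide
  rw [Fintype.card_fin] at hr
  exact Subtype.ext (by rw [← hA, this r hr, map_one, coe_one])

theorem flagPerm_injective : Function.Injective flagPerm := by
  have := faithfulSMul_projFlag (by decide) center_SL3_eq_bot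
  exact (Equiv.permCongrHom _).injective.comp MulAction.toPerm_injective

/-! ### Cycle types -/

theorem cycleType_permOfCycles {n : ℕ} {cs : List (List (Fin n))} (hnodup : cs.flatten.Nodup)
    (hlength : ∀ c ∈ cs, 2 ≤ c.length) :
    (permOfCycles cs).cycleType = (cs.map List.length : List ℕ) := by
  obtain ⟨nodup, disjoint⟩ := List.nodup_flatten.1 hnodup
  rw [permOfCycles, Equiv.Perm.cycleType_eq (cs.map List.formPerm) rfl, List.map_map]
  · congr 1
    refine List.map_congr_left fun c hc ↦ ?_
    have ne_singleton (i : Fin n) : c ≠ [i] := by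
      rintro rfl
      simpa using hlength _ hc
    rw [Function.comp_apply, Function.comp_apply,
      List.support_formPerm_of_nodup c (nodup c hc) ne_singleton,
      List.toFinset_card_of_nodup (nodup c hc)]
  · simp only [List.mem_map, forall_exists_index, and_imp, forall_apply_eq_imp_iff₂]
    exact fun c hc ↦ List.isCycle_formPerm (nodup c hc) (hlength c hc)
  · refine List.pairwise_map.2 (disjoint.imp_of_mem fun {a b} ha hb hab ↦ ?_)
    exact (List.formPerm_disjoint_iff (nodup a ha) (nodup b hb) (hlength a ha) (hlength b hb)).2 hab

theorem cycleType_x : x.cycleType = Multiset.replicate 5 8 + Multiset.replicate 3 4 :=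
  (cycleType_permOfCycles (by decide +kernel) (by decide +kernel)).trans (by decide +kernel)

theorem cycleType_y : y.cycleType = Multiset.replicate 24 2 :=
  (cycleType_permOfCycles (by decide +kernel) (by decide +kernel)).trans (by decide +kernel)

-- The point called 52 in the statement is `0` in `Fin 52`.
theorem inv_x_mul_y_eq_permOfCycles : (x * y)⁻¹ = permOfCycles [
    [0, 21, 14, 38], [1, 44, 31, 28], [2, 6], [3, 30, 10, 22], [4, 48, 36, 19], [5, 24, 23, 47],
    [7, 16, 50, 35], [9, 41, 20, 29], [12, 25, 26, 46], [13, 34, 42, 45], [17, 37], [18, 43],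
    [27, 51, 40, 32], [39, 49]] := by
  refine inv_eq_of_mul_eq_one_right (Equiv.ext ?_)
  decide +kernel

theorem cycleType_inv_x_mul_y :
    ((x * y)⁻¹).cycleType = Multiset.replicate 10 4 + Multiset.replicate 4 2 := by
  rw [inv_x_mul_y_eq_permOfCycles]
  exact (cycleType_permOfCycles (by decide +kernel) (by decide +kernel)).trans (by decide +kernel)

theorem orderOf_x : orderOf x = 8 := by
  rw [← Equiv.Perm.lcm_cycleType, cycleType_x]
  decide +kernel

theorem orderOf_y : orderOf y = 2 := by
  rw [← Equiv.Perm.lcm_cycleType, cycleType_y]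
  decide +kernel

theorem orderOf_inv_x_mul_y : orderOf (x * y)⁻¹ = 4 := by
  rw [← Equiv.Perm.lcm_cycleType, cycleType_inv_x_mul_y]
  decide +kernel

theorem permInd_add_permInd_add_permInd :
    permInd x + permInd y + permInd (x * y)⁻¹ = 2 * (52 - 1) := by
  rw [permInd, permInd, permInd, cycleType_x, cycleType_y, cycleType_inv_x_mul_y]
  simp

/-! ### The group generated by `x` and `y` -/

theorem transvection_natCast {ι R : Type*} [Fintype ι] [DecidableEq ι] [CommRing R] {i j : ι}
    (hij : i ≠ j) (n : ℕ) : transvection hij (n : R) = transvection hij 1 ^ n := by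
  induction n with
  | zero => rw [Nat.cast_zero, pow_zero, transvection_coeff_zero]
  | succ n ih => rw [Nat.cast_succ, transvection_add, ih, pow_succ]

theorem transvection_mem_of_one_mem {ι : Type*} [Fintype ι] [DecidableEq ι] {n : ℕ} [NeZero n]
    {H : Subgroup (Matrix.SpecialLinearGroup ι (ZMod n))} {i j : ι} {hij : i ≠ j}
    (h : transvection hij 1 ∈ H) (a : ZMod n) : transvection hij a ∈ H := by
  rw [← ZMod.natCast_zmod_val a, transvection_natCast]
  exact pow_mem h _

theorem eq_top_of_transvections_mem {F : Type*} [Field F] {H : Subgroup SL(3, F)}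
    (hH : ∀ A ∈ H, contragredient A ∈ H)
    (h₀₁ : ∀ a, transvection (i := 0) (j := 1) (by decide) a ∈ H)
    (h₁₂ : ∀ a, transvection (i := 1) (j := 2) (by decide) a ∈ H) : H = ⊤ := by
  have h₀₂ (a : F) : transvection (i := 0) (j := 2) (by decide) a ∈ H := by
    rw [transvection_eq_commutatorElement (k := 1) _ (by decide) (by decide)]
    exact H.commutator_le_self (Subgroup.commutator_mem_commutator (h₀₁ a) (h₁₂ 1))
  have upper {i j : Fin 3} (hij : i < j) (a : F) : transvection hij.ne a ∈ H := by
    fin_cases i <;> fin_cases j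
    all_goals first | exact absurd hij (by decide) | exact h₀₁ a | exact h₀₂ a | exact h₁₂ a
  refine eq_top_iff.2 (closure_transvections_eq_top.symm.trans_le ((Subgroup.closure_le _).2 ?_))
  rintro _ ⟨i, j, hij, a, rfl⟩
  rcases hij.lt_or_gt with hlt | hgt
  · exact upper hlt a
  · simpa only [contragredient_transvection, neg_neg, SetLike.mem_coe] using hH _ (upper hgt (-a))

/-- The matrix of the collineation underlying `x`. -/
def xMat : SL(3, ZMod 3) := ⟨!![1, 1, 1; 1, 1, 2; 1, 0, 1], by decide⟩

/-- The contragredient of `xMat`, with its entries spelled out so that identities in it are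
decidable by evaluation. -/
def xMatDual : SL(3, ZMod 3) := ⟨!![1, 1, 2; 2, 0, 1; 1, 2, 0], by decide⟩

theorem contragredient_xMat : contragredient xMat = xMatDual :=
  contragredient_eq_of_mul_transpose_eq_one (by decide +kernel)

-- Without this, unification evaluates these permutations and matrices entry by entry.
attribute [local irreducible] x y pointVec xMat xMatDual

theorem x_eq_flagPerm : x = flagPerm xMat := by
  have smul_pointVec : ∀ i, (∃ a : ZMod 3, a • pointVec (x i) = xMat • pointVec i) ∧
      ∃ a : ZMod 3, a • pointVec (y (x i)) = xMatDual • pointVec (y i) := by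
    decide +kernel
  ext1 i
  obtain ⟨hpoint, hpolar⟩ := smul_pointVec i
  exact (flagPerm_eq_of_smul_pointVec hpoint (contragredient_xMat ▸ hpolar)).symm

theorem y_mul_y : y * y = 1 :=
  Equiv.ext y_apply_y_apply

/-- The group generated by `x` and `y`. -/
abbrev polarityGroup : Subgroup (Equiv.Perm (Fin 52)) := Subgroup.closure {x, y}

theorem x_mem : x ∈ polarityGroup := Subgroup.subset_closure (by simp)

theorem y_mem : y ∈ polarityGroup := Subgroup.subset_closure (by simp)

theorem comap_flagPerm_polarityGroup : polarityGroup.comap flagPerm = ⊤ := by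
  have stable : ∀ A ∈ polarityGroup.comap flagPerm,
      contragredient A ∈ polarityGroup.comap flagPerm := by
    intro A hA
    have : flagPerm (contragredient A) = y * flagPerm A * y := by
      rw [y_mul_flagPerm, mul_assoc, y_mul_y, mul_one]
    rw [Subgroup.mem_comap, this]
    exact mul_mem (mul_mem y_mem hA) y_mem
  have mem : xMat ∈ polarityGroup.comap flagPerm := by
    rw [Subgroup.mem_comap, ← x_eq_flagPerm]
    exact x_mem
  have memDual : xMatDual ∈ polarityGroup.comap flagPerm := contragredient_xMat ▸ stable _ mem
  have transvection₀₁ : transvection (i := (0 : Fin 3)) (j := 1) (by decide) (1 : ZMod 3) =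
      xMat ^ 4 * xMatDual ^ 2 * xMat ^ 6 * xMatDual ^ 2 * xMat ^ 2 * xMatDual ^ 7 := by
    decide +kernel
  have transvection₁₂ : transvection (i := (1 : Fin 3)) (j := 2) (by decide) (1 : ZMod 3) =
      xMat ^ 5 * xMatDual ^ 2 * xMat ^ 5 * xMatDual ^ 4 := by
    decide +kernel
  refine eq_top_of_transvections_mem stable (transvection_mem_of_one_mem ?_)
    (transvection_mem_of_one_mem ?_)
  · rw [transvection₀₁]
    exact mul_mem (mul_mem (mul_mem (mul_mem (mul_mem (pow_mem mem 4) (pow_mem memDual 2))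
      (pow_mem mem 6)) (pow_mem memDual 2)) (pow_mem mem 2)) (pow_mem memDual 7)
  · rw [transvection₁₂]
    exact mul_mem (mul_mem (mul_mem (pow_mem mem 5) (pow_mem memDual 2)) (pow_mem mem 5))
      (pow_mem memDual 4)

theorem flagPerm_mem (A : SL(3, ZMod 3)) : flagPerm A ∈ polarityGroup :=
  Subgroup.mem_comap.1 (comap_flagPerm_polarityGroup ▸ Subgroup.mem_top A)

theorem card_specialLinearGroup_mul_card_units {ι R : Type*} [Fintype ι] [DecidableEq ι]
    [Nonempty ι] [CommRing R] :
    Nat.card (Matrix.SpecialLinearGroup ι R) * Nat.card Rˣ =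
      Nat.card (Matrix.GeneralLinearGroup ι R) := by
  let det : Matrix.GeneralLinearGroup ι R →* Rˣ := Matrix.GeneralLinearGroup.det
  have index_ker_det : det.ker.index = Nat.card Rˣ := by
    rw [Subgroup.index_ker, MonoidHom.range_eq_top.2 Matrix.GeneralLinearGroup.det_surjective,
      Subgroup.card_top]
  have card_ker_det : Nat.card det.ker = Nat.card (Matrix.SpecialLinearGroup ι R) := by
    rw [← Nat.card_range_of_injective toGL_injective, range_toGL]
    rfl
  rw [← card_ker_det, ← index_ker_det, Subgroup.card_mul_index]

theorem card_SL3 : Nat.card SL(3, ZMod 3) = 5616 := by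
  have card_mul := card_specialLinearGroup_mul_card_units (ι := Fin 3) (R := ZMod 3)
  rw [Matrix.card_GL_field, Nat.card_units, Nat.card_zmod, ZMod.card] at card_mul
  exact Nat.eq_of_mul_eq_mul_right two_pos (card_mul.trans (by simp [Fin.prod_univ_three]))

theorem exists_eq_or_eq_mul_of_mem_closure {S G : Type*} [Group S] [Group G] {f : S →* G}
    {τ : S → S} {t : G} (hτ : ∀ A, t * f A = f (τ A) * t) (ht : t * t = 1) {m : S} {g : G}
    (hg : g ∈ Subgroup.closure {f m, t}) : ∃ A, g = f A ∨ g = f A * t := by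
  have inv_t : t⁻¹ = t := inv_eq_of_mul_eq_one_right ht
  induction hg using Subgroup.closure_induction with
  | mem g hg =>
    rcases hg with rfl | rfl
    · exact ⟨m, .inl rfl⟩
    · exact ⟨1, .inr (by rw [map_one, one_mul])⟩
  | one => exact ⟨1, .inl (map_one f).symm⟩
  | mul g h _ _ hg hh =>
    obtain ⟨A, rfl | rfl⟩ := hg <;> obtain ⟨B, rfl | rfl⟩ := hh
    · exact ⟨A * B, .inl (map_mul f A B).symm⟩
    · exact ⟨A * B, .inr (by rw [map_mul, mul_assoc])⟩
    · exact ⟨A * τ B, .inr (by rw [map_mul, mul_assoc, hτ, mul_assoc])⟩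
    · exact ⟨A * τ B, .inl (by rw [mul_assoc, ← mul_assoc t, hτ, mul_assoc, ht, map_mul, mul_one])⟩
  | inv g _ hg =>
    obtain ⟨A, rfl | rfl⟩ := hg
    · exact ⟨A⁻¹, .inl (map_inv f A).symm⟩
    · exact ⟨τ A⁻¹, .inr (by rw [mul_inv_rev, inv_t, ← map_inv, hτ])⟩

theorem exists_eq_flagPerm_or_eq_flagPerm_mul_y {g : Equiv.Perm (Fin 52)}
    (hg : g ∈ polarityGroup) : ∃ A, g = flagPerm A ∨ g = flagPerm A * y := by
  rw [polarityGroup, x_eq_flagPerm] at hg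
  exact exists_eq_or_eq_mul_of_mem_closure y_mul_flagPerm y_mul_y hg

theorem trace_inv_eq_of_mul_contragredient_eq {ι R : Type*} [Fintype ι] [DecidableEq ι]
    [CommRing R] {A B : Matrix.SpecialLinearGroup ι R} (h : A * contragredient B = B * A) :
    B⁻¹.val.trace = B.val.trace := by
  have conj : contragredient B = A⁻¹ * B * A := by rw [mul_assoc, ← h, inv_mul_cancel_left]
  rw [← trace_contragredient, conj, coe_mul, coe_mul, Matrix.trace_mul_comm, ← mul_assoc,
    ← coe_mul, mul_inv_cancel, coe_one, one_mul]

theorem not_commute_flagPerm_mul_y_x (A : SL(3, ZMod 3)) : ¬ Commute (flagPerm A * y) x := by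
  intro hcomm
  have hA : A * contragredient xMat = xMat * A := by
    apply flagPerm_injective
    apply mul_right_cancel (b := y)
    rw [map_mul, map_mul, mul_assoc, ← y_mul_flagPerm, mul_assoc, ← mul_assoc, ← x_eq_flagPerm]
    exact hcomm
  have trace_ne : xMatDual.val.trace ≠ xMat.val.trace := by decide +kernel
  apply trace_ne
  rw [← contragredient_xMat, trace_contragredient, trace_inv_eq_of_mul_contragredient_eq hA]

theorem y_notMem_range_flagPerm : y ∉ flagPerm.range := by
  rintro ⟨A, hA⟩
  apply not_commute_flagPerm_mul_y_x A⁻¹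
  rw [map_inv, hA, inv_mul_cancel]
  exact Commute.one_left x

theorem range_flagPerm_le : flagPerm.range ≤ polarityGroup := by
  rintro _ ⟨A, rfl⟩
  exact flagPerm_mem A

/-- The copy of `SL(3, 3)` inside the group generated by `x` and `y`. -/
noncomputable abbrev collineationSubgroup : Subgroup polarityGroup :=
  flagPerm.range.subgroupOf polarityGroup

/-- The action on flags identifies `SL(3, 3)` with the collineations in `⟨x, y⟩`. -/
noncomputable def collineationEquiv : SL(3, ZMod 3) ≃* collineationSubgroup :=
  (MonoidHom.ofInjective flagPerm_injective).trans
    (Subgroup.subgroupOfEquivOfLe range_flagPerm_le).symm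

theorem index_collineationSubgroup : collineationSubgroup.index = 2 := by
  rw [Subgroup.index_eq_two_iff_exists_notMem_and]
  refine ⟨⟨y, y_mem⟩, y_notMem_range_flagPerm, fun ⟨g, hg⟩ ↦ ?_⟩
  obtain ⟨A, rfl | rfl⟩ := exists_eq_flagPerm_or_eq_flagPerm_mul_y hg
  · exact .inr ⟨A, rfl⟩
  · exact .inl ⟨A, by simp [mul_assoc, y_mul_y]⟩

theorem card_polarityGroup : Nat.card polarityGroup = 11232 := by
  rw [← collineationSubgroup.card_mul_index, index_collineationSubgroup,
    ← Nat.card_congr collineationEquiv.toEquiv, card_SL3]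

theorem isSimpleGroup_collineationSubgroup : IsSimpleGroup collineationSubgroup := by
  have := isSimpleGroup_specialLinearGroup (by decide) center_SL3_eq_bot
  exact collineationEquiv.symm.isSimpleGroup

theorem centralizer_collineationSubgroup :
    Subgroup.centralizer (collineationSubgroup : Set polarityGroup) = ⊥ := by
  refine (Subgroup.eq_bot_iff_forall _).2 fun ⟨g, hg⟩ hcentral ↦ Subtype.ext ?_
  have commute_flagPerm (B : SL(3, ZMod 3)) : flagPerm B * g = g * flagPerm B :=
    congrArg Subtype.val (Subgroup.mem_centralizer_iff.1 hcentral ⟨flagPerm B, flagPerm_mem B⟩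
      ⟨B, rfl⟩)
  obtain ⟨A, rfl | rfl⟩ := exists_eq_flagPerm_or_eq_flagPerm_mul_y hg
  · have hA : A ∈ Subgroup.center SL(3, ZMod 3) := Subgroup.mem_center_iff.2 fun B ↦
      flagPerm_injective (by rw [map_mul, map_mul, commute_flagPerm])
    rw [center_SL3_eq_bot, Subgroup.mem_bot] at hA
    exact (congrArg flagPerm hA).trans (map_one flagPerm)
  · refine absurd (commute_flagPerm xMat).symm ?_
    rw [← x_eq_flagPerm]
    exact not_commute_flagPerm_mul_y_x A

theorem exists_mul_ne_mul_collineationSubgroup :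
    ∃ a b : collineationSubgroup, a * b ≠ b * a := by
  have noncomm : xMat * xMatDual ≠ xMatDual * xMat := by decide +kernel
  refine ⟨collineationEquiv xMat, collineationEquiv xMatDual, fun h ↦ noncomm ?_⟩
  exact collineationEquiv.injective (by rw [map_mul, map_mul, h])

theorem polarityGroup_ne_top : polarityGroup ≠ ⊤ := by
  intro h
  have card_eq := card_polarityGroup
  rw [h, Subgroup.card_top, Nat.card_perm, Nat.card_fin] at card_eq
  exact absurd card_eq (by decide +kernel)

theorem polarityGroup_ne_alternatingGroup : polarityGroup ≠ alternatingGroup (Fin 52) := by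
  intro h
  have card_eq := two_mul_nat_card_alternatingGroup (α := Fin 52)
  rw [← h, card_polarityGroup, Nat.card_perm, Nat.card_fin] at card_eq
  exact absurd card_eq (by decide +kernel)

/-! ### Primitivity -/

open scoped Pointwise in
theorem isPreprimitive_of_coloring {G X κ : Type*} [Group G] [MulAction G X] [Fintype X]
    [DecidableEq κ] {b : X} (r : κ → X) (c : X → κ) (hr : ∀ k, r k ∈ MulAction.orbit G b)
    (hc : ∀ i, ∃ g ∈ MulAction.stabilizer G b, g • r (c i) = i)
    (hcard : ∀ T : Finset κ, c b ∈ T → Finset.card {i | c i ∈ T} ∣ Fintype.card X →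
      Finset.card {i | c i ∈ T} ≤ 1 ∨ Finset.card {i | c i ∈ T} = Fintype.card X) :
    MulAction.IsPreprimitive G X := by
  have mem_orbit (i : X) : i ∈ MulAction.orbit G b := by
    obtain ⟨g, -, hg⟩ := hc i
    exact hg ▸ MulAction.mem_orbit_of_mem_orbit g (hr (c i))
  have : MulAction.IsPretransitive G X := by
    rw [MulAction.isPretransitive_iff_base b]
    exact mem_orbit
  refine MulAction.IsPreprimitive.of_isTrivialBlock_base b fun {B} hbB hB ↦ ?_
  have smul_mem_iff {g : G} (hg : g ∈ MulAction.stabilizer G b) (i : X) : g • i ∈ B ↔ i ∈ B := by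
    have : g • B = B := hB.smul_eq_of_mem hbB (by rwa [MulAction.mem_stabilizer_iff.1 hg])
    rw [← this, Set.smul_mem_smul_set_iff, this]
  have mem_iff (i : X) : i ∈ B ↔ r (c i) ∈ B := by
    obtain ⟨g, hg, hgi⟩ := hc i
    rw [← smul_mem_iff hg (r (c i)), hgi]
  classical
  let T : Finset κ := (Finset.univ.image c).filter fun k ↦ r k ∈ B
  have hBT : B = ({i | c i ∈ T} : Finset X) := by
    ext i
    simp [T, mem_iff i]
  have hbT : c b ∈ T := by simpa [hBT] using hbB
  have hdvd := hB.ncard_dvd_card ⟨b, hbB⟩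
  rw [hBT, Set.ncard_coe_finset, Nat.card_eq_fintype_card] at hdvd
  rcases hcard T hbT hdvd with hle | heq
  · exact .inl (hBT ▸ fun i hi j hj ↦ Finset.card_le_one.1 hle i hi j hj)
  · exact .inr (by rw [hBT, Finset.card_eq_iff_eq_univ _ |>.1 heq, Finset.coe_univ])

/-- The unipotent maps `1 + a vwᵀ + b wvᵀ + c vvᵀ`, where `v = (1,1,1)` is isotropic and orthogonal
to `w = (0,1,2)`: they fix the flag `(⟨v⟩, vᗮ)`. -/
def baseUnipotent (a b c : ZMod 3) : SL(3, ZMod 3) :=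
  ⟨1 + a • Matrix.vecMulVec ![1, 1, 1] ![0, 1, 2] + b • Matrix.vecMulVec ![0, 1, 2] ![1, 1, 1] +
      c • Matrix.vecMulVec ![1, 1, 1] ![1, 1, 1], by
    revert a b c
    decide +kernel⟩

theorem contragredient_baseUnipotent (a b c : ZMod 3) :
    contragredient (baseUnipotent a b c) = baseUnipotent (-b) (-a) (-c - a * b) := by
  apply contragredient_eq_of_mul_transpose_eq_one
  revert a b c
  decide +kernel

/-- The gallery distance of the flag numbered `i` from the base flag `(⟨v⟩, vᗮ)`, `v = (1,1,1)`:
the length of the shortest chain of flags in which neighbours share their point or their line. -/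
def baseDistance (i : Fin 52) : Fin 4 :=
  let v : Fin 3 → ZMod 3 := ![1, 1, 1]
  if pointVec i = v ∧ pointVec (y i) = v then 0
  else if pointVec i = v ∨ pointVec (y i) = v then 1
  else if pointVec i ⬝ᵥ v = 0 ∨ pointVec (y i) ⬝ᵥ v = 0 then 2
  else 3

/-- A flag at each gallery distance from the base flag. -/
def distanceRep : Fin 4 → Fin 52 := ![6, 32, 2, 13]

theorem distanceRep_mem_orbit (k : Fin 4) : distanceRep k ∈ MulAction.orbit polarityGroup 6 := by
  let g : Fin 4 → polarityGroup :=
    ![1, ⟨x, x_mem⟩ ^ 2 * ⟨y, y_mem⟩ * ⟨x, x_mem⟩ ^ 2, ⟨x, x_mem⟩, ⟨x, x_mem⟩ ^ 2]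
  refine ⟨g k, ?_⟩
  revert k
  decide +kernel

theorem exists_baseUnipotent_distanceRep (i : Fin 52) : ∃ a b c : ZMod 3, ∃ e : Fin 2,
    flagPerm (baseUnipotent a b c) ((y ^ e.val) (distanceRep (baseDistance i))) = i := by
  have smul_pointVec : ∀ i, ∃ a b c : ZMod 3, ∃ e : Fin 2,
      (∃ s : ZMod 3, s • pointVec i =
        baseUnipotent a b c • pointVec ((y ^ e.val) (distanceRep (baseDistance i)))) ∧
      ∃ s : ZMod 3, s • pointVec (y i) = baseUnipotent (-b) (-a) (-c - a * b) •
        pointVec (y ((y ^ e.val) (distanceRep (baseDistance i)))) := by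
    decide +kernel
  obtain ⟨a, b, c, e, hpoint, hpolar⟩ := smul_pointVec i
  rw [← contragredient_baseUnipotent] at hpolar
  exact ⟨a, b, c, e, flagPerm_eq_of_smul_pointVec hpoint hpolar⟩

theorem flagPerm_baseUnipotent_base (a b c : ZMod 3) :
    flagPerm (baseUnipotent a b c) 6 = 6 := by
  refine flagPerm_eq_of_smul_pointVec ?_ ?_
  · revert a b c
    decide +kernel
  · rw [contragredient_baseUnipotent]
    revert a b c
    decide +kernel

theorem isPreprimitive_polarityGroup : MulAction.IsPreprimitive polarityGroup (Fin 52) := by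
  refine isPreprimitive_of_coloring distanceRep baseDistance distanceRep_mem_orbit
    (fun i ↦ ?_) (by decide +kernel)
  obtain ⟨a, b, c, e, hi⟩ := exists_baseUnipotent_distanceRep i
  have y_base : y 6 = 6 := by decide +kernel
  refine ⟨⟨flagPerm (baseUnipotent a b c) * y ^ e.val,
    mul_mem (flagPerm_mem _) (pow_mem y_mem _)⟩, ?_, hi⟩
  have : (y ^ e.val) 6 = 6 := Equiv.Perm.pow_apply_eq_self_of_apply_eq_self y_base _
  exact (congrArg _ this).trans (flagPerm_baseUnipotent_base a b c)

/-! ### Rationality -/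

theorem exists_conj_eq_zpow_of_coprime {G : Type*} [Group G] [Finite G] {H : Subgroup G} {g : G}
    (hpow : ∀ r < orderOf g, r.Coprime (orderOf g) → ∃ h ∈ H, h * g * h⁻¹ = g ^ r) {k : ℤ}
    (hk : Int.gcd k (orderOf g) = 1) : ∃ h ∈ H, h * g * h⁻¹ = g ^ k := by
  have order_pos : (0 : ℤ) < orderOf g := mod_cast orderOf_pos g
  obtain ⟨r, hr⟩ := Int.eq_ofNat_of_zero_le (k.emod_nonneg order_pos.ne')
  have hlt : r < orderOf g := by
    have := k.emod_lt_of_pos order_pos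
    omega
  have hcoprime : r.Coprime (orderOf g) := by
    rw [Nat.coprime_iff_gcd_eq_one, ← Int.gcd_natCast_natCast, ← hr, Int.gcd_emod, hk]
  obtain ⟨h, hh, conj⟩ := hpow r hlt hcoprime
  exact ⟨h, hh, by rw [conj, ← zpow_mod_orderOf, hr, zpow_natCast]⟩

theorem conj_flagPerm_eq_of_mul_eq {A B C : SL(3, ZMod 3)} (h : C * A = B * C) :
    flagPerm C * flagPerm A * (flagPerm C)⁻¹ = flagPerm B := by
  rw [← map_mul, h, map_mul, mul_inv_cancel_right]

theorem conj_flagPerm_eq_of_mul_contragredient_eq {A B C : SL(3, ZMod 3)}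
    (h : C * contragredient A = B * C) :
    flagPerm C * y * flagPerm A * (flagPerm C * y)⁻¹ = flagPerm B := by
  rw [mul_inv_eq_iff_eq_mul, mul_assoc (flagPerm C), y_mul_flagPerm, ← mul_assoc, ← map_mul, h,
    map_mul, mul_assoc]

theorem inv_flagPerm_mul_y (A : SL(3, ZMod 3)) :
    (flagPerm A * y)⁻¹ = flagPerm A.transpose * y := by
  rw [mul_inv_rev, inv_eq_of_mul_eq_one_right y_mul_y, ← map_inv, y_mul_flagPerm,
    contragredient_inv]

theorem conj_flagPerm_mul_y (A C : SL(3, ZMod 3)) :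
    flagPerm C * (flagPerm A * y) * (flagPerm C)⁻¹ = flagPerm (C * A * C.transpose) * y := by
  rw [← map_inv, mul_assoc, mul_assoc, y_mul_flagPerm, contragredient_inv, map_mul, map_mul,
    mul_assoc, mul_assoc]

theorem exists_conj_x_eq_pow (r : ℕ) (hr : r < orderOf x) (hcoprime : r.Coprime (orderOf x)) :
    ∃ h ∈ polarityGroup, h * x * h⁻¹ = x ^ r := by
  let C₃ : SL(3, ZMod 3) := ⟨!![2, 0, 0; 0, 2, 0; 1, 2, 1], by decide⟩
  let C₅ : SL(3, ZMod 3) := ⟨!![1, 0, 0; 0, 0, 1; 2, 2, 1], by decide⟩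
  let C₇ : SL(3, ZMod 3) := ⟨!![2, 0, 0; 0, 0, 2; 0, 2, 0], by decide⟩
  rw [orderOf_x] at hr hcoprime
  have conj₃ : C₃ * xMat = xMat ^ 3 * C₃ := by decide +kernel
  have conj₅ : C₅ * contragredient xMat = xMat ^ 5 * C₅ := by
    rw [contragredient_xMat]
    decide +kernel
  have conj₇ : C₇ * contragredient xMat = xMat ^ 7 * C₇ := by
    rw [contragredient_xMat]
    decide +kernel
  have hodd : r = 1 ∨ r = 3 ∨ r = 5 ∨ r = 7 := by
    revert r
    decide
  rw [x_eq_flagPerm, ← map_pow]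
  rcases hodd with rfl | rfl | rfl | rfl
  · exact ⟨1, one_mem _, by rw [pow_one, one_mul, inv_one, mul_one]⟩
  · exact ⟨_, flagPerm_mem C₃, conj_flagPerm_eq_of_mul_eq conj₃⟩
  · exact ⟨_, mul_mem (flagPerm_mem C₅) y_mem, conj_flagPerm_eq_of_mul_contragredient_eq conj₅⟩
  · exact ⟨_, mul_mem (flagPerm_mem C₇) y_mem, conj_flagPerm_eq_of_mul_contragredient_eq conj₇⟩

theorem exists_conj_y_eq_pow (r : ℕ) (hr : r < orderOf y) (hcoprime : r.Coprime (orderOf y)) :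
    ∃ h ∈ polarityGroup, h * y * h⁻¹ = y ^ r := by
  rw [orderOf_y] at hr hcoprime
  obtain rfl : r = 1 := by
    revert r
    decide
  exact ⟨1, one_mem _, by rw [pow_one, one_mul, inv_one, mul_one]⟩

theorem exists_conj_inv_x_mul_y_eq_pow (r : ℕ) (hr : r < orderOf (x * y)⁻¹)
    (hcoprime : r.Coprime (orderOf (x * y)⁻¹)) :
    ∃ h ∈ polarityGroup, h * (x * y)⁻¹ * h⁻¹ = (x * y)⁻¹ ^ r := by
  rw [orderOf_inv_x_mul_y] at hr hcoprime
  have hodd : r = 1 ∨ r = 3 := by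
    revert r
    decide
  rcases hodd with rfl | rfl
  · exact ⟨1, one_mem _, by rw [pow_one, one_mul, inv_one, mul_one]⟩
  · let C : SL(3, ZMod 3) := ⟨!![2, 0, 0; 0, 0, 2; 0, 2, 0], by decide⟩
    have congruent : C * xMat.transpose * C.transpose = xMat := by decide +kernel
    have cube_eq_inv : (x * y)⁻¹ ^ 3 = x * y := by
      have pow_four := pow_orderOf_eq_one (x * y)⁻¹
      rw [orderOf_inv_x_mul_y, pow_succ] at pow_four
      exact mul_inv_eq_one.1 pow_four
    refine ⟨_, flagPerm_mem C, ?_⟩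
    rw [cube_eq_inv, x_eq_flagPerm, inv_flagPerm_mul_y, conj_flagPerm_mul_y, congruent]

/-! ### Rigidity -/

theorem rigid_of_exists_commute {G : Type*} [Group G] {H : Subgroup G} {x y : G}
    (hrigid : ∀ b ∈ H, ∀ c ∈ H, x * (b * y * b⁻¹) = c * (x * y) * c⁻¹ →
      ∃ g ∈ H, Commute g x ∧ g * y * g⁻¹ = b * y * b⁻¹) {x' y' z' : G} (hmul : x' * y' * z' = 1)
    (hx : ∃ g ∈ H, g * x * g⁻¹ = x') (hy : ∃ g ∈ H, g * y * g⁻¹ = y')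
    (hz : ∃ g ∈ H, g * (x * y)⁻¹ * g⁻¹ = z') :
    ∃ g ∈ H, g * x * g⁻¹ = x' ∧ g * y * g⁻¹ = y' ∧ g * (x * y)⁻¹ * g⁻¹ = z' := by
  obtain ⟨a, ha, rfl⟩ := hx
  obtain ⟨b, hb, rfl⟩ := hy
  obtain ⟨c, hc, rfl⟩ := hz
  have mul_eq : x * (a⁻¹ * b * y * (a⁻¹ * b)⁻¹) = a⁻¹ * c * (x * y) * (a⁻¹ * c)⁻¹ := by
    calc x * (a⁻¹ * b * y * (a⁻¹ * b)⁻¹) = a⁻¹ * (a * x * a⁻¹ * (b * y * b⁻¹)) * a := by group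
      _ = a⁻¹ * c * (x * y) * (a⁻¹ * c)⁻¹ := by
        rw [eq_inv_of_mul_eq_one_left hmul]
        group
  obtain ⟨g, hg, hcomm, hgy⟩ :=
    hrigid _ (mul_mem (inv_mem ha) hb) _ (mul_mem (inv_mem ha) hc) mul_eq
  have conj_x : a * g * x * (a * g)⁻¹ = a * x * a⁻¹ := by
    rw [mul_assoc a, hcomm.eq]
    group
  have conj_y : a * g * y * (a * g)⁻¹ = b * y * b⁻¹ := by
    calc a * g * y * (a * g)⁻¹ = a * (g * y * g⁻¹) * a⁻¹ := by group
      _ = b * y * b⁻¹ := by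
        rw [hgy]
        group
  refine ⟨a * g, mul_mem ha hg, conj_x, conj_y, ?_⟩
  rw [eq_inv_of_mul_eq_one_right hmul, ← conj_x, ← conj_y]
  group

theorem exists_conj_flagPerm_mul_y_eq (A : SL(3, ZMod 3)) {g : Equiv.Perm (Fin 52)}
    (hg : g ∈ polarityGroup) :
    ∃ C, g * (flagPerm A * y) * g⁻¹ = flagPerm (C * A * C.transpose) * y := by
  obtain ⟨C, rfl | rfl⟩ := exists_eq_flagPerm_or_eq_flagPerm_mul_y hg
  · exact ⟨C, conj_flagPerm_mul_y A C⟩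
  · refine ⟨C * contragredient A, ?_⟩
    have mul_eq : flagPerm C * y * (flagPerm A * y) = flagPerm (C * contragredient A) := by
      rw [mul_assoc, ← mul_assoc y, y_mul_flagPerm, mul_assoc _ y, y_mul_y, mul_one, map_mul]
    calc flagPerm C * y * (flagPerm A * y) * (flagPerm C * y)⁻¹
      _ = flagPerm C * y * (flagPerm A * y) * (flagPerm A * y) *
            (flagPerm C * y * (flagPerm A * y))⁻¹ := by group
      _ = _ := by rw [mul_eq, conj_flagPerm_mul_y]

theorem exists_conj_y_eq {g : Equiv.Perm (Fin 52)} (hg : g ∈ polarityGroup) :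
    ∃ A : SL(3, ZMod 3), g * y * g⁻¹ = flagPerm (A * A.transpose) * y := by
  obtain ⟨A, hA⟩ := exists_conj_flagPerm_mul_y_eq 1 hg
  rw [map_one, one_mul, mul_one] at hA
  exact ⟨A, hA⟩

theorem xMat_add_transpose :
    xMat.val + xMat.val.transpose = -Matrix.vecMulVec ![1, 1, 1] ![1, 1, 1] := by
  decide +kernel

theorem eq_xMat_pow_mul_transpose_of_add_transpose_eq {S : SL(3, ZMod 3)}
    (hsymm : S.val.transpose = S.val) {w : Fin 3 → ZMod 3}
    (hform : xMat.val * S.val + (xMat.val * S.val).transpose = -Matrix.vecMulVec w w) :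
    ∃ k : ℕ, S = xMat ^ k * (xMat ^ k).transpose := by
  have entries : ∀ a b c d e f : ZMod 3, Matrix.det !![a, b, c; b, d, e; c, e, f] = 1 →
      ∀ w, xMat.val * !![a, b, c; b, d, e; c, e, f] +
        (xMat.val * !![a, b, c; b, d, e; c, e, f]).transpose = -Matrix.vecMulVec w w →
      ∃ k : Fin 8, !![a, b, c; b, d, e; c, e, f] =
        (xMat ^ k.val * (xMat ^ k.val).transpose).val := by
    decide +kernel
  have symm_entry (i j : Fin 3) : S.val j i = S.val i j := congrFun₂ hsymm i j
  have hS : S.val = !![S.val 0 0, S.val 0 1, S.val 0 2; S.val 0 1, S.val 1 1, S.val 1 2;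
      S.val 0 2, S.val 1 2, S.val 2 2] := by
    rw [Matrix.eta_fin_three S.val, symm_entry 0 1, symm_entry 0 2, symm_entry 1 2]
    rfl
  obtain ⟨k, hk⟩ := entries _ _ _ _ _ _ (hS ▸ S.det_coe) w (hS ▸ hform)
  exact ⟨k, Subtype.ext (hS.trans hk)⟩

theorem eq_xMat_pow_mul_transpose_of_congruent {A C : SL(3, ZMod 3)}
    (hcongr : xMat * (A * A.transpose) = C * xMat * C.transpose) :
    ∃ k : ℕ, A * A.transpose = xMat ^ k * (xMat ^ k).transpose := by
  have hsymm : (A * A.transpose).val.transpose = (A * A.transpose).val := by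
    simp [Matrix.transpose_mul]
  refine eq_xMat_pow_mul_transpose_of_add_transpose_eq hsymm
    (w := C.val.mulVec ![1, 1, 1]) ?_
  have hval : xMat.val * (A * A.transpose).val = C.val * xMat.val * C.val.transpose :=
    congrArg Subtype.val hcongr
  calc xMat.val * (A * A.transpose).val + (xMat.val * (A * A.transpose).val).transpose
    _ = C.val * (xMat.val + xMat.val.transpose) * C.val.transpose := by
      rw [hval]
      simp only [Matrix.transpose_mul, Matrix.transpose_transpose, mul_add, add_mul, mul_assoc]
    _ = -Matrix.vecMulVec (C.val.mulVec ![1, 1, 1]) (C.val.mulVec ![1, 1, 1]) := by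
      rw [xMat_add_transpose, mul_neg, neg_mul, Matrix.mul_vecMulVec, Matrix.vecMulVec_mul,
        Matrix.vecMul_transpose]

theorem exists_commute_x_conj_y_eq {b c : Equiv.Perm (Fin 52)} (hb : b ∈ polarityGroup)
    (hc : c ∈ polarityGroup) (hmul : x * (b * y * b⁻¹) = c * (x * y) * c⁻¹) :
    ∃ g ∈ polarityGroup, Commute g x ∧ g * y * g⁻¹ = b * y * b⁻¹ := by
  obtain ⟨A, hA⟩ := exists_conj_y_eq hb
  obtain ⟨C, hC⟩ := exists_conj_flagPerm_mul_y_eq xMat hc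
  rw [hA, x_eq_flagPerm, hC, ← mul_assoc, ← map_mul] at hmul
  obtain ⟨k, hk⟩ :=
    eq_xMat_pow_mul_transpose_of_congruent (flagPerm_injective (mul_right_cancel hmul))
  refine ⟨x ^ k, pow_mem x_mem k, (Commute.refl x).pow_left k, ?_⟩
  have conj := conj_flagPerm_mul_y 1 (xMat ^ k)
  rw [map_one, one_mul, mul_one, map_pow, ← x_eq_flagPerm] at conj
  rw [conj, hA, hk]

theorem nice_triple_deg52_stmt2 :
    IsNice x y (x * y)⁻¹ ∧
    x.cycleType = Multiset.replicate 5 8 + Multiset.replicate 3 4 ∧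
    y.cycleType = Multiset.replicate 24 2 ∧
    ((x * y)⁻¹).cycleType = Multiset.replicate 10 4 + Multiset.replicate 4 2 ∧
    Nat.card ↥(Subgroup.closure {x, y} : Subgroup (Equiv.Perm (Fin 52))) = 11232 := by
  refine ⟨⟨mul_inv_cancel _, ⟨polarityGroup_ne_alternatingGroup, polarityGroup_ne_top⟩,
    ⟨isPreprimitive_polarityGroup.toIsPretransitive,
      fun _ ↦ isPreprimitive_polarityGroup.isTrivialBlock_of_isBlock⟩,
    ⟨collineationSubgroup, Subgroup.normal_of_index_eq_two index_collineationSubgroup,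
      isSimpleGroup_collineationSubgroup, exists_mul_ne_mul_collineationSubgroup,
      centralizer_collineationSubgroup⟩,
    permInd_add_permInd_add_permInd, fun _ _ _ hmul _ ↦ ?rigid, ?rational⟩,
    cycleType_x, cycleType_y, cycleType_inv_x_mul_y, card_polarityGroup⟩
  case rigid =>
    exact rigid_of_exists_commute (fun _ hb _ hc ↦ exists_commute_x_conj_y_eq hb hc) hmul
  case rational =>
    rintro g (rfl | rfl | rfl) k hk
    · exact exists_conj_eq_zpow_of_coprime exists_conj_x_eq_pow hk
    · exact exists_conj_eq_zpow_of_coprime exists_conj_y_eq_pow hk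
    · exact exists_conj_eq_zpow_of_coprime exists_conj_inv_x_mul_y_eq_pow hk
end
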